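/- For every infinite stochastic vector η with positive entries and ∑_{i=1}^∞ η_i · |log η_i| < ∞, the set F(η) of η-quasinormal numbers for the continued fraction expansion is dense in [0,1]. -/

import Mathlib

open Real Filter

/-- The Gauss map `T x = 1/x - ⌊1/x⌋`. -/
noncomputable def gaussT (x : ℝ) : ℝ := x⁻¹ - ⌊x⁻¹⌋

/-- The `k+1`-st digit of `x` in the continued fraction expansion: `d_{k+1}(x) = ⌊1/T^k x⌋`. -/
noncomputable def cfDigit (k : ℕ) (x : ℝ) : ℤ := ⌊(gaussT^[k] x)⁻¹⌋

/-- The set `F(η)` of `η`-quasinormal numbers for the continued fraction expansion. -/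
def cfFreqSet (η : ℕ+ → ℝ) : Set ℝ :=
  {x | x ∈ Set.Ioo (0 : ℝ) 1 ∧ Irrational x ∧ ∀ i : ℕ+,
    Tendsto (fun n => (((Finset.range n).filter
        (fun k => cfDigit k x = ((i : ℕ) : ℤ))).card : ℝ) / n) atTop (nhds (η i))}

lemma gaussT_f {x : ℝ} (hx : x ∈ Set.Ioo (0:ℝ) 1) (a : ℕ+) :
    ⌊(((a:ℕ):ℝ) + x)⁻¹⁻¹⌋ = ((a:ℕ):ℤ) ∧ gaussT ((((a:ℕ):ℝ) + x)⁻¹) = x := by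
  have h : ⌊(((a:ℕ):ℝ) + x)⁻¹⁻¹⌋ = ((a:ℕ):ℤ) := by
    rw [inv_inv, Int.floor_eq_iff]
    constructor
    · push_cast; linarith [hx.1]
    · push_cast; linarith [hx.2]
  refine ⟨h, ?_⟩
  unfold gaussT
  rw [h, inv_inv]; push_cast; ring

lemma f_mem {x : ℝ} (hx : x ∈ Set.Ioo (0:ℝ) 1) (a : ℕ+) :
    (((a:ℕ):ℝ) + x)⁻¹ ∈ Set.Ioo (0:ℝ) 1 := by
  have h1 : (1:ℝ) ≤ ((a:ℕ):ℝ) := by exact_mod_cast a.pos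
  have := hx.1
  exact ⟨by positivity, inv_lt_one_of_one_lt₀ (by linarith)⟩

lemma digit_f_succ {x : ℝ} (hx : x ∈ Set.Ioo (0:ℝ) 1) (a : ℕ+) (k : ℕ) :
    cfDigit (k+1) ((((a:ℕ):ℝ) + x)⁻¹) = cfDigit k x := by
  unfold cfDigit
  rw [Function.iterate_succ_apply, (gaussT_f hx a).2]

lemma f_freq {η : ℕ+ → ℝ} {x : ℝ} (hx : x ∈ cfFreqSet η) (a : ℕ+) :
    (((a:ℕ):ℝ) + x)⁻¹ ∈ cfFreqSet η := by
  obtain ⟨h1, h2, h3⟩ := hx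
  refine ⟨f_mem h1 a, (h2.natCast_add _).inv, fun i => ?_⟩
  rw [← tendsto_add_atTop_iff_nat 1]
  set c : ℝ := if cfDigit 0 ((((a:ℕ):ℝ) + x)⁻¹) = ((i:ℕ):ℤ) then 1 else 0 with hc
  have t1 := tendsto_natCast_div_add_atTop (𝕜 := ℝ) 1
  have t2 : Tendsto (fun n : ℕ => c * (1 / ((n:ℝ) + 1))) atTop (nhds (c * 0)) :=
    tendsto_one_div_add_atTop_nhds_zero_nat.const_mul c
  have t := ((h3 i).mul t1).add t2
  simp only [mul_one, mul_zero, add_zero] at t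
  refine t.congr fun n => ?_
  have hcard : ((((Finset.range (n+1)).filter
        (fun k => cfDigit k ((((a:ℕ):ℝ) + x)⁻¹) = ((i : ℕ) : ℤ))).card : ℕ) : ℝ) =
      (((Finset.range n).filter (fun k => cfDigit k x = ((i : ℕ) : ℤ))).card : ℝ) + c := by
    rw [Finset.card_filter, Finset.card_filter, Finset.sum_range_succ']
    simp only [digit_f_succ h1]
    push_cast
    rw [hc]
  rw [hcard]
  have hn1 : (n:ℝ) + 1 ≠ 0 := by positivity
  rcases Nat.eq_zero_or_pos n with rfl | hn
  · simp
  · have : (n:ℝ) ≠ 0 := by positivity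
    push_cast
    field_simp

lemma zero_mem_cl {η : ℕ+ → ℝ} (hne : (cfFreqSet η).Nonempty) : (0:ℝ) ∈ closure (cfFreqSet η) := by
  obtain ⟨x, hx⟩ := hne
  refine mem_closure_of_tendsto (f := fun n : ℕ => ((((n.succPNat:ℕ+):ℕ):ℝ) + x)⁻¹) (b := atTop) ?_
    (Eventually.of_forall fun n => f_freq hx _)
  apply Tendsto.inv_tendsto_atTop
  apply tendsto_atTop_add_const_right
  exact tendsto_natCast_atTop_atTop.comp (tendsto_add_atTop_nat 1)

lemma f_cl {η : ℕ+ → ℝ} {x : ℝ} (hx : x ∈ closure (cfFreqSet η)) (h0 : 0 ≤ x) (a : ℕ+) :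
    (((a:ℕ):ℝ) + x)⁻¹ ∈ closure (cfFreqSet η) := by
  have h1 : (1:ℝ) ≤ ((a:ℕ):ℝ) := by exact_mod_cast a.pos
  have hc : ContinuousAt (fun x : ℝ => (((a:ℕ):ℝ) + x)⁻¹) x := by
    apply ContinuousAt.inv₀ (by fun_prop)
    positivity
  have := hc.continuousWithinAt.mem_closure_image hx
  refine closure_mono ?_ this
  rintro _ ⟨y, hy, rfl⟩
  exact f_freq hy a

lemma rat_cl {η : ℕ+ → ℝ} (hne : (cfFreqSet η).Nonempty) (q : ℕ) :
    ∀ p : ℕ, p < q → ((p:ℝ) / q) ∈ closure (cfFreqSet η) := by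
  induction q using Nat.strong_induction_on with
  | _ q ih =>
    intro p hp
    rcases Nat.eq_zero_or_pos p with rfl | hp0
    · simpa using zero_mem_cl hne
    · have h := f_cl (ih p hp (q % p) (Nat.mod_lt _ hp0)) (by positivity)
        ⟨q / p, Nat.div_pos hp.le hp0⟩
      convert h using 1
      have e : (q:ℝ) = p * ((q / p : ℕ) : ℝ) + ((q % p : ℕ):ℝ) := by
        exact_mod_cast (Nat.div_add_mod q p).symm
      have hpr : (p:ℝ) ≠ 0 := by positivity
      simp only [PNat.mk_coe]
      rw [← inv_div, inv_inj]
      rw [eq_comm]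
      field_simp
      linarith

lemma Icc_cl {η : ℕ+ → ℝ} (hne : (cfFreqSet η).Nonempty) :
    Set.Icc (0 : ℝ) 1 ⊆ closure (cfFreqSet η) := by
  rw [← closure_Ioo (zero_ne_one)]
  apply closure_minimal _ isClosed_closure
  intro x hx
  have h1 : x ∈ closure (Set.Ioo (0:ℝ) 1 ∩ Set.range ((↑) : ℚ → ℝ)) := 
    (Rat.denseRange_cast (𝕜 := ℝ)).open_subset_closure_inter isOpen_Ioo hx
  refine closure_minimal ?_ isClosed_closure h1
  rintro _ ⟨⟨h0, h1⟩, ⟨r, rfl⟩⟩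
  have hr0 : 0 < r := by exact_mod_cast h0
  have hr1 : r < 1 := by exact_mod_cast h1
  have hn : (r.num.natAbs : ℤ) = r.num := Int.natAbs_of_nonneg (Rat.num_pos.2 hr0).le
  have hlt : r.num.natAbs < r.den := by
    have h := Rat.lt_iff r 1 |>.1 hr1
    simp at h
    omega
  have := rat_cl hne r.den r.num.natAbs hlt
  convert this using 1
  rw [Rat.cast_def]
  congr 1
  rw [← Int.cast_natCast, hn]

/-- finite continued fraction maps -/
noncomputable def gcf : ℕ → (ℕ → ℕ+) → ℝ → ℝ
  | 0, _, t => t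
  | n+1, a, t => (((a 0 : ℕ) : ℝ) + gcf n (fun k => a (k+1)) t)⁻¹

lemma f_Icc {x : ℝ} (hx : x ∈ Set.Icc (0:ℝ) 1) (a : ℕ+) :
    (((a:ℕ):ℝ) + x)⁻¹ ∈ Set.Icc (0:ℝ) 1 := by
  have h1 : (1:ℝ) ≤ ((a:ℕ):ℝ) := by exact_mod_cast a.pos
  have := hx.1
  exact ⟨by positivity, inv_le_one_of_one_le₀ (by linarith)⟩

lemma gcf_mem (n : ℕ) : ∀ (a : ℕ → ℕ+) {t : ℝ}, t ∈ Set.Icc (0:ℝ) 1 → gcf n a t ∈ Set.Icc (0:ℝ) 1 := by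
  induction n with
  | zero => intro a t ht; exact ht
  | succ n ih => intro a t ht; exact f_Icc (ih _ ht) _

lemma gcf_succ (n : ℕ) : ∀ (a : ℕ → ℕ+) (t : ℝ),
    gcf (n+1) a t = gcf n a ((((a n : ℕ) : ℝ) + t)⁻¹) := by
  induction n with
  | zero => intro a t; rfl
  | succ n ih => intro a t; rw [gcf, ih]; rfl

lemma gcf_cont (n : ℕ) : ∀ (a : ℕ → ℕ+), ContinuousOn (gcf n a) (Set.Icc 0 1) := by
  induction n with
  | zero => intro a; exact continuousOn_id
  | succ n ih =>
    intro a
    apply ContinuousOn.inv₀ (continuousOn_const.add (ih _))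
    intro t ht
    have h1 : (0:ℝ) < ((a 0:ℕ):ℝ) := by exact_mod_cast (a 0).pos
    have := (gcf_mem n (fun k => a (k+1)) ht).1
    exact ne_of_gt (add_pos_of_pos_of_nonneg h1 this)

def cfK (a : ℕ → ℕ+) : Set ℝ := ⋂ n, gcf n a '' Set.Icc 0 1

lemma cfK_ne (a : ℕ → ℕ+) : (cfK a).Nonempty := by
  have hc : ∀ n, IsCompact (gcf n a '' Set.Icc 0 1) := fun n => isCompact_Icc.image_of_continuousOn (gcf_cont n a)
  apply IsCompact.nonempty_iInter_of_sequence_nonempty_isCompact_isClosed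
  · rintro n _ ⟨t, ht, rfl⟩
    rw [gcf_succ]
    exact ⟨_, f_Icc ht _, rfl⟩
  · intro n; exact ⟨_, 0, by simp, rfl⟩
  · exact hc 0
  · exact fun n => (hc n).isClosed

lemma cfK_tail {a : ℕ → ℕ+} {x : ℝ} (hx : x ∈ cfK a) :
    x⁻¹ - ((a 0 : ℕ):ℝ) ∈ cfK (fun k => a (k+1)) := by
  rw [cfK, Set.mem_iInter] at hx ⊢
  intro n
  obtain ⟨t, ht, h⟩ := hx (n+1)
  refine ⟨t, ht, ?_⟩
  rw [← h, gcf, inv_inv]; ring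

lemma cfK_Icc {a : ℕ → ℕ+} {x : ℝ} (hx : x ∈ cfK a) : x ∈ Set.Icc (0:ℝ) 1 := by
  rw [cfK, Set.mem_iInter] at hx
  obtain ⟨t, ht, h⟩ := hx 0
  exact h ▸ ht

lemma cfK_pos {a : ℕ → ℕ+} {x : ℝ} (hx : x ∈ cfK a) : 0 < x := by
  rw [cfK, Set.mem_iInter] at hx
  obtain ⟨t, ht, h⟩ := hx 1
  rw [← h]
  have h1 : (0:ℝ) < ((a 0:ℕ):ℝ) := by exact_mod_cast (a 0).pos
  have := ht.1
  simp only [gcf]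
  positivity

lemma cfK_Ioo {a : ℕ → ℕ+} {x : ℝ} (hx : x ∈ cfK a) : x ∈ Set.Ioo (0:ℝ) 1 := by
  refine ⟨cfK_pos hx, ?_⟩
  have h := cfK_pos (cfK_tail hx)
  have h1 : (1:ℝ) ≤ ((a 0:ℕ):ℝ) := by exact_mod_cast (a 0).pos
  have h2 : 1 < x⁻¹ := by linarith
  exact (one_lt_inv₀ (cfK_pos hx)).1 h2

lemma cfK_gauss {a : ℕ → ℕ+} {x : ℝ} (hx : x ∈ cfK a) :
    ⌊x⁻¹⌋ = ((a 0 : ℕ) : ℤ) ∧ gaussT x ∈ cfK (fun k => a (k+1)) := by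
  have h := gaussT_f (cfK_Ioo (cfK_tail hx)) (a 0)
  rw [add_sub_cancel, inv_inv x] at h
  refine ⟨h.1, ?_⟩
  rw [h.2]; exact cfK_tail hx

lemma cfK_digit (k : ℕ) : ∀ {a : ℕ → ℕ+} {x : ℝ}, x ∈ cfK a → cfDigit k x = ((a k : ℕ) : ℤ) := by
  induction k with
  | zero => intro a x hx; exact (cfK_gauss hx).1
  | succ k ih =>
    intro a x hx
    have := ih (cfK_gauss hx).2
    rw [← this]; simp [cfDigit]

lemma cfK_irr_aux (q : ℕ) : ∀ {a : ℕ → ℕ+} {x : ℝ}, x ∈ cfK a → ∀ p : ℕ, x ≠ (p:ℝ) / q := by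
  induction q using Nat.strong_induction_on with
  | _ q ih =>
    intro a x hx p hpq
    have h := cfK_Ioo hx
    rcases Nat.eq_zero_or_pos q with rfl | hq
    · rw [hpq] at h; simp at h
    have hq' : (0:ℝ) < q := by exact_mod_cast hq
    have hp : p < q := by
      have := h.2
      rw [hpq, div_lt_one hq'] at this
      exact_mod_cast this
    have hp0 : (0:ℝ) < p := by
      have := h.1
      rw [hpq] at this
      exact (div_pos_iff_of_pos_right hq').1 this
    have h2 := cfK_tail hx
    have h3 := cfK_pos h2
    have e : x⁻¹ - ((a 0 : ℕ):ℝ) = ((q:ℝ) - (a 0 : ℕ) * p) / p := by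
      rw [hpq, inv_div]; field_simp
    have h4 : ((a 0 : ℕ) : ℝ) * p < q := by
      rw [e] at h3
      have := (div_pos_iff_of_pos_right hp0).1 h3
      linarith
    have h5 : (a 0 : ℕ) * p ≤ q := by exact_mod_cast h4.le
    refine ih p hp h2 (q - (a 0 : ℕ) * p) ?_
    rw [e, Nat.cast_sub h5]; push_cast; rfl

lemma cfK_irr {a : ℕ → ℕ+} {x : ℝ} (hx : x ∈ cfK a) : Irrational x := by
  rintro ⟨r, rfl⟩
  have h0 := cfK_pos hx
  have hr0 : 0 < r := by exact_mod_cast h0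
  have hn : (r.num.natAbs : ℤ) = r.num := Int.natAbs_of_nonneg (Rat.num_pos.2 hr0).le
  apply cfK_irr_aux r.den hx r.num.natAbs
  rw [Rat.cast_def]
  congr 1
  rw [← Int.cast_natCast, hn]

open MeasureTheory ProbabilityTheory in
lemma exists_seq (η : ℕ+ → ℝ) (hηpos : ∀ i, 0 < η i)
    (hηsum : Summable η) (hη1 : ∑' i, η i = 1) :
    ∃ a : ℕ → ℕ+, ∀ i : ℕ+, Tendsto (fun n : ℕ => (((Finset.range n).filter
        (fun k => a k = i)).card : ℝ) / n) atTop (nhds (η i)) := by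
  letI : MeasurableSpace ℕ+ := ⊤
  haveI : MeasurableSingletonClass ℕ+ := ⟨fun _ => trivial⟩
  let p : PMF ℕ+ := ⟨fun i => ENNReal.ofReal (η i), by
    rw [ENNReal.summable.hasSum_iff, ← ENNReal.ofReal_tsum_of_nonneg (fun i => (hηpos i).le) hηsum,
      hη1, ENNReal.ofReal_one]⟩
  let P := Measure.infinitePi (fun _ : ℕ => p.toMeasure)
  have key : ∀ i : ℕ+, ∀ᵐ ω ∂P, Tendsto (fun n : ℕ => (((Finset.range n).filter
        (fun k => ω k = i)).card : ℝ) / n) atTop (nhds (η i)) := by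
    intro i
    let g : ℕ+ → ℝ := Set.indicator {i} 1
    have hg : Measurable g := measurable_from_top
    have hmp : ∀ k : ℕ, MeasurePreserving (Function.eval k) P p.toMeasure := fun k =>
      measurePreserving_eval_infinitePi (fun _ : ℕ => p.toMeasure) k
    have hgi : Integrable g p.toMeasure :=
      (integrable_const (1:ℝ)).indicator (MeasurableSet.singleton i)
    have hint : ∫ ω, g (ω 0) ∂P = η i := by
      have h1 : ∫ ω, g (ω 0) ∂P = ∫ y, g y ∂p.toMeasure := by
        rw [← (hmp 0).map_eq, integral_map (hmp 0).measurable.aemeasurable hg.aestronglyMeasurable]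
      rw [h1, integral_indicator_one (MeasurableSet.singleton i), Measure.real,
        PMF.toMeasure_apply_singleton _ _ (MeasurableSet.singleton i)]
      exact ENNReal.toReal_ofReal (hηpos i).le
    have hs := strong_law_ae_real (μ := P) (fun k ω => g (ω k))
      ((hmp 0).integrable_comp_of_integrable hgi)
      (fun k l hkl => (iIndepFun_infinitePi (P := fun _ : ℕ => p.toMeasure)
        (X := fun _ => g) (fun _ => hg)).indepFun hkl)
      (fun k => ⟨(hg.comp (hmp k).measurable).aemeasurable,
        (hg.comp (hmp 0).measurable).aemeasurable, by
          have h : ∀ k : ℕ, Measure.map (fun ω : ℕ → ℕ+ => g (ω k)) P = Measure.map g p.toMeasure := by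
            intro k
            rw [← (hmp k).map_eq, Measure.map_map hg (hmp k).measurable]
            rfl
          rw [h, h]⟩)
    rw [hint] at hs
    filter_upwards [hs] with ω hω
    refine hω.congr fun n => ?_
    rw [Finset.card_filter]
    push_cast
    congr 1
    refine Finset.sum_congr rfl fun k _ => ?_
    simp only [g, Set.indicator_apply, Set.mem_singleton_iff, Pi.one_apply]
  have := ae_all_iff.2 key
  exact this.exists

/-- For every infinite stochastic vector `η` with positive entries and
`∑ᵢ ηᵢ |log ηᵢ| < ∞`, the set `F(η)` of `η`-quasinormal numbers for the continued fraction
expansion is dense in `[0, 1]`. -/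
theorem cf_quasinormal_dense
    (η : ℕ+ → ℝ) (hηpos : ∀ i, 0 < η i)
    (hηsum : Summable η) (hη1 : ∑' i, η i = 1)
    (hηlog : Summable (fun i => η i * |Real.log (η i)|)) :
    Set.Icc (0 : ℝ) 1 ⊆ closure (cfFreqSet η) := by
  obtain ⟨a, ha⟩ := exists_seq η hηpos hηsum hη1
  obtain ⟨x, hx⟩ := cfK_ne a
  refine Icc_cl ⟨x, cfK_Ioo hx, cfK_irr hx, fun i => ?_⟩
  refine (ha i).congr fun n => ?_
  simp only [cfK_digit _ hx, Nat.cast_inj, PNat.coe_inj]
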